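/- Fix an integer n ≥ 2 and let B(q) be the n×n matrix over ℚ(q) with B(q)_{ii} = [2]_q for 1 ≤ i ≤ n−1, B(q)_{nn} = [4]_q, B(q)_{i,i+1} = B(q)_{i+1,i} = −1 for 1 ≤ i ≤ n−2, B(q)_{n−1,n} = B(q)_{n,n−1} = −[2]_q, and all other entries 0 (the symmetrized q-Cartan matrix of type B_n in the paper's conventions). For 1 ≤ i ≤ n−1 set w_i = ⟨n+1⟩_q^{−1} · ( ⟨n−i+1⟩_q Σ_{j=1}^{i−1} [j]_q e_j + [i]_q ( Σ_{j=i}^{n−1} ⟨n−j+1⟩_q e_j + e_n ) ) ∈ ℚ(q)^n, and set w_n = ⟨n+1⟩_q^{−1} · ( Σ_{j=1}^{n−1} [j]_q e_j + ([n]_q/[2]_q) e_n ). Then B(q) · w_i = e_i for every 1 ≤ i ≤ n; equivalently, w_i is the i-th column of B(q)^{−1}. -/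

import Mathlib

/-!
The matrix is tridiagonal, so `B w_i = e_i` amounts to three-term relations between consecutive
entries of `w_i`. Both `m ↦ [m]` and `m ↦ ⟨m⟩` satisfy `x (m+2) = [2] x (m+1) - x m`
(`qNum_rec`, `qWh_rec`), which kills every entry off the diagonal away from the last two rows.
The diagonal entry is the Wronskian-type identity
`[i+1]⟨m+1⟩ - [i]⟨m⟩ = ⟨i+m+1⟩` (`qNum_mul_qWh_sub`), which produces the factor `⟨n+1⟩`. The last
two rows use in addition `[2] = ⟨1⟩` and `[4] = [2]⟨2⟩`.
-/

/-- The variable `q`, as an element of the field `ℚ(q)` of rational functions. -/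
noncomputable def qq : RatFunc ℚ := RatFunc.X

/-- The quantum number `[m]_q = (q^m − q^{−m})/(q − q^{−1}) = Σ_{i=0}^{m−1} q^{m−1−2i}`. -/
noncomputable def qNum (m : ℕ) : RatFunc ℚ :=
  ∑ i ∈ Finset.range m, qq ^ ((m : ℤ) - 1 - 2 * (i : ℤ))

/-- `⟨m⟩_q = q^m + q^{−m}`. -/
noncomputable def qWh (m : ℕ) : RatFunc ℚ := qq ^ (m : ℤ) + qq ^ (-(m : ℤ))

theorem qq_ne_zero : qq ≠ 0 := RatFunc.X_ne_zero

theorem qWh_ne_zero (m : ℕ) : qWh m ≠ 0 := by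
  intro h
  have hq := qq_ne_zero
  have h1 : qq ^ (2 * m) + 1 = 0 := by
    have h2 : qq ^ (m : ℤ) * qWh m = 0 := by rw [h, mul_zero]
    rw [qWh, zpow_neg, mul_add, mul_inv_cancel₀ (zpow_ne_zero _ hq), zpow_natCast] at h2
    rw [← h2]
    ring
  have h3 : algebraMap (Polynomial ℚ) (RatFunc ℚ) (Polynomial.X ^ (2 * m) + 1) = 0 := by
    rw [← h1]
    simp [qq]
  have h4 := (map_eq_zero_iff _ (RatFunc.algebraMap_injective ℚ)).1 h3
  have h5 := congrArg (Polynomial.eval 1) h4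
  norm_num at h5

theorem qq_sub_inv_ne_zero : qq - qq⁻¹ ≠ 0 := by
  intro h
  have hq := qq_ne_zero
  have h1 : qq ^ 2 - 1 = 0 := by
    have h2 : qq * (qq - qq⁻¹) = 0 := by rw [h, mul_zero]
    rw [mul_sub, mul_inv_cancel₀ hq] at h2
    rw [← h2]
    ring
  have h3 : algebraMap (Polynomial ℚ) (RatFunc ℚ) (Polynomial.X ^ 2 - 1) = 0 := by
    rw [← h1]
    simp [qq]
  have h4 := (map_eq_zero_iff _ (RatFunc.algebraMap_injective ℚ)).1 h3
  have h5 := congrArg (Polynomial.eval 2) h4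
  norm_num at h5

theorem qNum_zero : qNum 0 = 0 := by simp [qNum]

theorem qNum_one : qNum 1 = 1 := by simp [qNum]

theorem qNum_succ (m : ℕ) : qNum (m + 1) = qq * qNum m + (qq ^ m)⁻¹ := by
  have hq := qq_ne_zero
  rw [qNum, Finset.sum_range_succ, qNum, Finset.mul_sum]
  congr 1
  · refine Finset.sum_congr rfl fun i _ => ?_
    rw [← zpow_one_add₀ hq]
    congr 1
    push_cast
    ring
  · rw [← zpow_natCast, ← zpow_neg]
    congr 1
    push_cast
    ring

theorem qWh_eq (m : ℕ) : qWh m = qq ^ m + (qq ^ m)⁻¹ := by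
  rw [qWh, zpow_neg, zpow_natCast]

theorem qNum_closed (m : ℕ) : qNum m = (qq ^ m - (qq ^ m)⁻¹) / (qq - qq⁻¹) := by
  have hq := qq_ne_zero
  rw [eq_div_iff qq_sub_inv_ne_zero]
  induction m with
  | zero => simp [qNum_zero]
  | succ m ih =>
    rw [qNum_succ, add_mul, mul_assoc, ih]
    field_simp
    ring

theorem qNum_two : qNum 2 = qWh 1 := by
  rw [qNum_succ, qNum_one, qWh_eq]
  ring

theorem qNum_rec (m : ℕ) : qNum (m + 2) = qNum 2 * qNum (m + 1) - qNum m := by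
  have hq := qq_ne_zero
  have hd := qq_sub_inv_ne_zero
  rw [qNum_two, qWh_eq, qNum_closed, qNum_closed, qNum_closed, ← mul_div_assoc, ← sub_div]
  congr 1
  field_simp
  ring

theorem qWh_rec (m : ℕ) : qWh (m + 2) = qNum 2 * qWh (m + 1) - qWh m := by
  have hq := qq_ne_zero
  rw [qNum_two]
  simp only [qWh_eq]
  field_simp
  ring

theorem qNum_four : qNum 4 = qNum 2 * qWh 2 := by
  have hq := qq_ne_zero
  rw [qNum_succ, qNum_succ, qNum_two]
  simp only [qWh_eq]
  field_simp
  ring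

theorem qNum_mul_qWh_sub (i m : ℕ) :
    qNum (i + 1) * qWh (m + 1) - qNum i * qWh m = qWh (i + m + 1) := by
  have hq := qq_ne_zero
  have hd := qq_sub_inv_ne_zero
  rw [qNum_closed, qNum_closed, div_mul_eq_mul_div, div_mul_eq_mul_div, ← sub_div, div_eq_iff hd]
  simp only [qWh_eq]
  field_simp
  ring

/-- A row of a tridiagonal matrix times a vector has at most three nonzero terms. -/
theorem sum_tridiagonal {n : ℕ} (k : ℕ) (hk : k < n) (g : ℕ → RatFunc ℚ)
    (hg : ∀ j, j ≠ k → j + 1 ≠ k → j ≠ k + 1 → g j = 0) :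
    ∑ j : Fin n, g j.val =
      (if k = 0 then 0 else g (k - 1)) + g k + (if k + 1 < n then g (k + 1) else 0) := by
  rw [Fin.sum_univ_eq_sum_range g n]
  have h : ∀ j ∈ Finset.range n, g j = (if j = k - 1 then (if k = 0 then 0 else g (k - 1)) else 0)
      + (if j = k then g k else 0) + (if j = k + 1 then g (k + 1) else 0) := by
    intro j _
    by_cases h1 : j = k
    · subst h1
      rcases j with _ | j <;> simp
    by_cases h2 : j + 1 = k
    · subst h2
      have : j ≠ j + 1 + 1 := by omega
      simp [this]
    by_cases h3 : j = k + 1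
    · subst h3
      have : k + 1 ≠ k - 1 := by omega
      simp [this]
    rw [hg j h1 h2 h3]
    rcases k with _ | k
    · simp_all
    · have : j ≠ k := by omega
      simp [h1, h3, this]
  rw [Finset.sum_congr rfl h]
  have hk' : k - 1 < n := by omega
  simp [Finset.sum_add_distrib, Finset.sum_ite_eq', hk, hk']

/-- The rows of `B * u`, with `u` continued to a `1`-based sequence `v` by `v 0 = 0`; this
convention makes the first row an instance of the generic one. -/
theorem typeB_mulVec (n : ℕ)
    (B : Matrix (Fin n) (Fin n) (RatFunc ℚ))
    (hB : ∀ i j : Fin n, B i j =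
      if i = j then (if i.val + 1 = n then qNum 4 else qNum 2)
      else if i.val + 1 = j.val ∨ j.val + 1 = i.val then
        (if i.val + 1 = n ∨ j.val + 1 = n then -qNum 2 else -1)
      else 0)
    (u : Fin n → RatFunc ℚ) (v : ℕ → RatFunc ℚ) (hv : v 0 = 0)
    (huv : ∀ j : Fin n, u j = v (j.val + 1)) (k : Fin n) :
    B.mulVec u k =
      if k.val + 2 < n then qNum 2 * v (k.val + 1) - v (k.val + 2) - v k.val
      else if k.val + 2 = n then qNum 2 * v (k.val + 1) - qNum 2 * v (k.val + 2) - v k.val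
      else qNum 4 * v (k.val + 1) - qNum 2 * v k.val := by
  obtain ⟨k, hk⟩ := k
  rw [Matrix.mulVec, dotProduct]
  simp only [hB, huv, Fin.ext_iff]
  rw [sum_tridiagonal k hk (fun j => (if k = j then (if k + 1 = n then qNum 4 else qNum 2)
      else if k + 1 = j ∨ j + 1 = k then
        (if k + 1 = n ∨ j + 1 = n then -qNum 2 else -1)
      else 0) * v (j + 1))
    (fun j h1 h2 h3 => by rw [if_neg (Ne.symm h1), if_neg (by omega), zero_mul])]
  have hlow : (if k = 0 then 0 else (if k = k - 1 then (if k + 1 = n then qNum 4 else qNum 2)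
      else if k + 1 = k - 1 ∨ k - 1 + 1 = k then
        (if k + 1 = n ∨ k - 1 + 1 = n then -qNum 2 else -1)
      else 0) * v (k - 1 + 1)) = (if k + 1 = n then -qNum 2 else -1) * v k := by
    rcases k with _ | k
    · simp [hv]
    · have h1 : k + 1 ≠ n := by omega
      simp [h1]
  rw [hlow, if_pos rfl, if_neg (by omega : ¬ k = k + 1), if_pos (Or.inl rfl)]
  by_cases h1 : k + 1 = n
  · rw [if_pos h1, if_pos h1, if_neg (by omega), if_neg (by omega), if_neg (by omega)]
    ring
  · rw [if_neg h1, if_neg h1, if_pos (by omega : k + 1 < n)]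
    by_cases h2 : k + 2 = n
    · rw [if_pos (Or.inr h2), if_neg (by omega), if_pos h2]
      ring
    · rw [if_neg (by omega), if_pos (by omega)]
      ring

/-- For the symmetrized `q`-Cartan matrix `B(q)` of type `B_n`, the explicit vectors `w i`
(fundamental coweights) satisfy `B(q) ⬝ w i = e_i`, i.e. `w i` is the `i`-th column
of `B(q)⁻¹`. Indices are `0`-based: the index `i : Fin n` corresponds to `i+1` in
the `1`-based labelling of the paper. -/
theorem typeB_qCartan_coweights (n : ℕ) (hn : 2 ≤ n)
    (B : Matrix (Fin n) (Fin n) (RatFunc ℚ))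
    (hB : ∀ i j : Fin n, B i j =
      if i = j then (if i.val + 1 = n then qNum 4 else qNum 2)
      else if i.val + 1 = j.val ∨ j.val + 1 = i.val then
        (if i.val + 1 = n ∨ j.val + 1 = n then -qNum 2 else -1)
      else 0)
    (w : Fin n → Fin n → RatFunc ℚ)
    (hw : ∀ i j : Fin n, w i j =
      if i.val + 1 < n then
        (qWh (n + 1))⁻¹ *
          (if j.val < i.val then qWh (n - i.val) * qNum (j.val + 1)
           else if j.val + 1 < n then qNum (i.val + 1) * qWh (n - j.val)
           else qNum (i.val + 1))
      else
        (qWh (n + 1))⁻¹ *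
          (if j.val + 1 < n then qNum (j.val + 1) else qNum n / qNum 2)) :
    ∀ i : Fin n, B.mulVec (w i) = Pi.single i 1 := by
  intro i
  have hP : qWh (n + 1) ≠ 0 := qWh_ne_zero _
  have h2 : qNum 2 ≠ 0 := by rw [qNum_two]; exact qWh_ne_zero 1
  have h4 := qNum_four
  have h21 := qNum_two
  ext k
  by_cases hi : i.val + 1 < n
  · obtain ⟨v, hv⟩ : ∃ v : ℕ → RatFunc ℚ, ∀ j, v j = (qWh (n + 1))⁻¹ *
        (if j ≤ i.val then qWh (n - i.val) * qNum j
         else if j < n then qNum (i.val + 1) * qWh (n + 1 - j)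
         else qNum (i.val + 1)) := ⟨_, fun _ => rfl⟩
    rw [typeB_mulVec n B hB (w i) v (by simp [hv, qNum_zero])
      (fun j => by
        rw [hw, hv, if_pos hi, Nat.add_sub_add_right]
        rfl) k, Pi.single_apply]
    simp only [Fin.ext_iff]
    obtain ⟨i, hi'⟩ := i
    obtain ⟨k, hk⟩ := k
    dsimp only at hi hv ⊢
    obtain ⟨c, hc⟩ : ∃ c, n = i + (c + 1) := ⟨n - i - 1, by omega⟩
    -- The two formulas for the entries agree at `j = i + 1`.
    have hlow : ∀ j, j ≤ i + 1 → v j = (qWh (n + 1))⁻¹ * (qWh (c + 1) * qNum j) := by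
      intro j hj
      rw [hv]
      split_ifs with h3 h5
      · rw [show n - i = c + 1 by omega]
      · rw [show n + 1 - j = c + 1 by omega, show j = i + 1 by omega, mul_comm (qNum _)]
      · omega
    have hhigh : ∀ j e, i + 1 ≤ j → j < n → j + e = n + 1 →
        v j = (qWh (n + 1))⁻¹ * (qNum (i + 1) * qWh e) := by
      intro j e h3 h5 h6
      rw [hv, if_neg (by omega), if_pos h5, show n + 1 - j = e by omega]
    have hlast : v n = (qWh (n + 1))⁻¹ * qNum (i + 1) := by
      rw [hv, if_neg (by omega), if_neg (by omega)]
    have hdiag : qNum (i + 1) * qWh (c + 2) - qNum i * qWh (c + 1) = qWh (n + 1) := by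
      rw [qNum_mul_qWh_sub]
      congr 1
      omega
    have hdiag' : (qWh (n + 1))⁻¹ *
        (qNum (i + 1) * qWh (c + 2) - qNum i * qWh (c + 1)) = 1 := by
      rw [hdiag, inv_mul_cancel₀ hP]
    split_ifs with h3 h5 h6 h7 h8
    · subst h5
      obtain ⟨d, rfl⟩ : ∃ d, c = d + 1 := ⟨c - 1, by omega⟩
      rw [hlow (k + 1) le_rfl, hlow k (by omega), hhigh (k + 2) (d + 1) (by omega) h3 (by omega)]
      rw [← hdiag', qWh_rec (d + 1)]
      ring
    · rcases lt_or_gt_of_ne h5 with h9 | h9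
      · rw [hlow (k + 1) (by omega), hlow k (by omega), hlow (k + 2) (by omega), qNum_rec k]
        ring
      · obtain ⟨e, he⟩ : ∃ e, k + (e + 2) = n + 1 := ⟨n - k - 1, by omega⟩
        rw [hhigh (k + 1) (e + 1) (by omega) (by omega) (by omega),
          hhigh k (e + 2) (by omega) (by omega) (by omega),
          hhigh (k + 2) e (by omega) (by omega) (by omega), qWh_rec e]
        ring
    · subst h7
      obtain rfl : c = 1 := by omega
      rw [hlow (k + 1) le_rfl, hlow k (by omega), h6, hlast, ← hdiag', qWh_rec 1, ← h21]
      ring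
    · rw [h6, hlast, hhigh (k + 1) 2 (by omega) (by omega) (by omega),
        hhigh k 3 (by omega) (by omega) (by omega), qWh_rec 1, ← h21]
      ring
    · omega
    · rw [show k + 1 = n by omega, hlast, hhigh k 2 (by omega) (by omega) (by omega), h4]
      ring
  · obtain ⟨v, hv⟩ : ∃ v : ℕ → RatFunc ℚ, ∀ j, v j = (qWh (n + 1))⁻¹ *
        (if j < n then qNum j else qNum n / qNum 2) := ⟨_, fun _ => rfl⟩
    rw [typeB_mulVec n B hB (w i) v (by simp [hv, qNum_zero, show 0 < n by omega])
      (fun j => by rw [hw, hv, if_neg hi]) k, Pi.single_apply]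
    simp only [Fin.ext_iff]
    obtain ⟨i, hi'⟩ := i
    obtain ⟨k, hk⟩ := k
    dsimp only at hi hv ⊢
    have hlow : ∀ j, j < n → v j = (qWh (n + 1))⁻¹ * qNum j := fun j hj => by
      rw [hv, if_pos hj]
    have hlast : v n = (qWh (n + 1))⁻¹ * (qNum n / qNum 2) := by
      rw [hv, if_neg (by omega)]
    split_ifs with h3 h5 h6 h7 h8
    · omega
    · rw [hlow k hk, hlow (k + 1) (by omega), hlow (k + 2) h3, qNum_rec k]
      ring
    · omega
    · rw [hlow k hk, hlow (k + 1) (by omega), h6, hlast, ← h6, qNum_rec k]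
      field_simp
      ring
    · obtain rfl : n = k + 1 := by omega
      have hdiag := qNum_mul_qWh_sub k 1
      rw [hlow k hk, hlast, h4]
      rw [← h21] at hdiag
      field_simp
      linear_combination hdiag
    · omega
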